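/- For almost every sample path (γ_n) of the simple random walk on the Schreier graph Γ ≅ ℤ[1/2] started at γ₀ = 0, the 2-adic norms tend to infinity: padicNorm 2 (γ_n) → ∞ as n → ∞. -/

import Mathlib

open MeasureTheory Filter

noncomputable section

/-- The four one-step moves of the simple random walk on the Schreier graph `Γ ≅ ℤ[1/2]`,
acting on rationals: `Ã`, `Ã⁻¹`, `B̃` and `B̃⁻¹` in this order. -/
def stepQ : Fin 4 → ℚ → ℚ
  | 0 => fun x => x - 1
  | 1 => fun x => x + 1
  | 2 => fun x => if x ≤ 0 then x else if x ≤ 2 then x / 2 else x - 1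
  | 3 => fun x => if x ≤ 0 then x else if x ≤ 1 then 2 * x else x + 1

/-- The trajectory of the simple random walk on `Γ` driven by the sequence of choices `s`,
started at `γ₀`: at each step one of the four maps `Ã, Ã⁻¹, B̃, B̃⁻¹` is applied. -/
def walkQ (s : ℕ → Fin 4) (γ₀ : ℚ) : ℕ → ℚ
  | 0 => γ₀
  | n + 1 => stepQ (s n) (walkQ s γ₀ n)

/-- The set `ℤ[1/2] ⊆ ℚ` of dyadic rational numbers. -/
def DyadicQ : Set ℚ := {x | ∃ (k : ℤ) (m : ℕ), x = (k : ℚ) / 2 ^ m}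

/-! ### The Lyapunov function -/

/-- The exponent `m` in the 2-adic norm `2^m` (truncated at `0`). -/
def dep (x : ℚ) : ℕ := (-padicValRat 2 x).toNat

/-- Harmonic numbers: a strictly concave, unbounded profile along the hairs. -/
def prof (k : ℕ) : ℝ := ∑ i ∈ Finset.range k, (1 / ((i : ℝ) + 1))

/-- The position along a hair. -/
def pos (n : ℤ) : ℕ := if n ≤ 0 then (-n).toNat else (n - 1).toNat

/-- The Lyapunov function as function of the integer part. -/
def phi (n : ℤ) : ℝ := (if n ≤ 0 then 1 else 23 / 25) + prof (pos n) / 100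

/-- The Lyapunov function. -/
def lyap (x : ℚ) : ℝ := (4 / 5 : ℝ) ^ dep x * phi ⌊x⌋

/-- The drift of the Lyapunov function as function of the integer part. -/
def drf (n : ℤ) : ℝ := 1 / (400 * ((pos n : ℝ) + 1) ^ 2)

/-- The drift. -/
def drift (x : ℚ) : ℝ := (4 / 5 : ℝ) ^ dep x * drf ⌊x⌋

lemma prof_succ (k : ℕ) : prof (k + 1) = prof k + 1 / ((k : ℝ) + 1) := by
  simp [prof, Finset.sum_range_succ]

lemma prof_zero : prof 0 = 0 := by simp [prof]

lemma prof_one : prof 1 = 1 := by simp [prof]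

lemma prof_nonneg (k : ℕ) : 0 ≤ prof k := Finset.sum_nonneg fun i _ => by positivity

lemma phi_nonneg (n : ℤ) : 0 ≤ phi n := by
  have := prof_nonneg (pos n)
  unfold phi
  split_ifs <;> linarith

lemma drf_nonneg (n : ℤ) : 0 ≤ drf n := by unfold drf; positivity

lemma lyap_nonneg (x : ℚ) : 0 ≤ lyap x := mul_nonneg (by positivity) (phi_nonneg _)

lemma drift_nonneg (x : ℚ) : 0 ≤ drift x := mul_nonneg (by positivity) (drf_nonneg _)

lemma dep_int (n : ℤ) : dep (n : ℚ) = 0 := by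
  simp [dep]

lemma dep_odd (k : ℤ) (hk : Odd k) (m : ℕ) : dep ((k : ℚ) / 2 ^ m) = m := by
  have hk0 : (k : ℚ) ≠ 0 := by
    rintro h
    have : k = 0 := by exact_mod_cast h
    subst this
    exact absurd hk (by decide)
  have h2 : ¬ ((2 : ℕ) : ℤ) ∣ k := by
    have := Int.not_even_iff_odd.2 hk
    rwa [even_iff_two_dvd] at this
  have h3 : padicValRat 2 (2 : ℚ) = 1 := by
    have := padicValRat.self (p := 2) (by norm_num)
    simpa using this
  unfold dep
  rw [padicValRat.div hk0 (by positivity), padicValRat.pow, h3, padicValRat.of_int,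
    padicValInt.eq_zero_of_not_dvd h2]
  simp

lemma dyadic_cases {x : ℚ} (hx : x ∈ DyadicQ) :
    (∃ n : ℤ, x = n) ∨ ∃ (k : ℤ) (m : ℕ), Odd k ∧ x = (k : ℚ) / 2 ^ (m + 1) := by
  obtain ⟨k, m, rfl⟩ := hx
  induction m generalizing k with
  | zero => exact Or.inl ⟨k, by simp⟩
  | succ m ih =>
    rcases Int.even_or_odd' k with ⟨j, h | h⟩
    · have : (k : ℚ) / 2 ^ (m + 1) = (j : ℚ) / 2 ^ m := by
        rw [h]; push_cast; field_simp; ring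
      rw [this]; exact ih j
    · exact Or.inr ⟨k, m, ⟨j, h⟩, rfl⟩

lemma dyadic_int (n : ℤ) : (n : ℚ) ∈ DyadicQ := ⟨n, 0, by simp⟩

lemma dyadic_step (i : Fin 4) {x : ℚ} (hx : x ∈ DyadicQ) : stepQ i x ∈ DyadicQ := by
  have h1 : x + 1 ∈ DyadicQ := by
    obtain ⟨k, m, rfl⟩ := hx
    exact ⟨k + 2 ^ m, m, by push_cast; field_simp⟩
  have h2 : x - 1 ∈ DyadicQ := by
    obtain ⟨k, m, rfl⟩ := hx
    exact ⟨k - 2 ^ m, m, by push_cast; field_simp⟩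
  have h3 : x / 2 ∈ DyadicQ := by
    obtain ⟨k, m, rfl⟩ := hx
    exact ⟨k, m + 1, by field_simp; ring⟩
  have h4 : 2 * x ∈ DyadicQ := by
    obtain ⟨k, m, rfl⟩ := hx
    exact ⟨2 * k, m, by push_cast; field_simp⟩
  fin_cases i <;> simp only [stepQ] <;> (try split_ifs) <;> assumption

lemma phi_lin_neg (n : ℤ) (hn : n < 0) : phi (n - 1) + phi (n + 1) + 2 * phi n + 4 * drf n
    ≤ 4 * phi n := by
  obtain ⟨k, rfl⟩ : ∃ k : ℕ, n = -(k : ℤ) - 1 := ⟨(-n - 1).toNat, by omega⟩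
  have e1 : pos (-(k : ℤ) - 1) = k + 1 := by unfold pos; split_ifs <;> omega
  have e2 : pos (-(k : ℤ) - 1 - 1) = k + 1 + 1 := by unfold pos; split_ifs <;> omega
  have e3 : pos (-(k : ℤ) - 1 + 1) = k := by unfold pos; split_ifs <;> omega
  unfold phi drf
  rw [if_pos (by omega), if_pos (by omega), if_pos (by omega), e1, e2, e3, prof_succ (k + 1),
    prof_succ k]
  push_cast
  have : 1 / ((k : ℝ) + 1) - 1 / ((k : ℝ) + 1 + 1) ≥ 1 / ((k : ℝ) + 1 + 1) ^ 2 := by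
    rw [ge_iff_le, div_sub_div _ _ (by positivity) (by positivity),
      div_le_div_iff₀ (by positivity) (by positivity)]
    nlinarith [(Nat.cast_nonneg k : (0 : ℝ) ≤ k)]
  have e : 1 / (400 * ((k : ℝ) + 1 + 1) ^ 2) = 1 / ((k : ℝ) + 1 + 1) ^ 2 / 400 := by
    field_simp
  rw [e]
  linarith

lemma phi_lin_pos (n : ℤ) (hn : 2 ≤ n) : 2 * phi (n - 1) + 2 * phi (n + 1) + 4 * drf n
    ≤ 4 * phi n := by
  obtain ⟨k, rfl⟩ : ∃ k : ℕ, n = (k : ℤ) + 2 := ⟨(n - 2).toNat, by omega⟩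
  have e1 : pos ((k : ℤ) + 2) = k + 1 := by unfold pos; split_ifs <;> omega
  have e2 : pos ((k : ℤ) + 2 + 1) = k + 1 + 1 := by unfold pos; split_ifs <;> omega
  have e3 : pos ((k : ℤ) + 2 - 1) = k := by unfold pos; split_ifs <;> omega
  unfold phi drf
  rw [if_neg (by omega), if_neg (by omega), if_neg (by omega), e1, e2, e3, prof_succ (k + 1),
    prof_succ k]
  push_cast
  have : 1 / ((k : ℝ) + 1) - 1 / ((k : ℝ) + 1 + 1) ≥ 1 / ((k : ℝ) + 1 + 1) ^ 2 := by
    rw [ge_iff_le, div_sub_div _ _ (by positivity) (by positivity),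
      div_le_div_iff₀ (by positivity) (by positivity)]
    nlinarith [(Nat.cast_nonneg k : (0 : ℝ) ≤ k)]
  have e : 1 / (400 * ((k : ℝ) + 1 + 1) ^ 2) = 1 / ((k : ℝ) + 1 + 1) ^ 2 / 400 := by
    field_simp
  have : 0 ≤ 1 / ((k : ℝ) + 1 + 1) ^ 2 := by positivity
  rw [e]
  linarith

lemma phi_m1 : phi (-1) = 101 / 100 := by
  have : pos (-1) = 1 := by decide
  unfold phi; rw [this, prof_one]; norm_num
lemma phi_0 : phi 0 = 1 := by
  have : pos 0 = 0 := by decide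
  unfold phi; rw [this, prof_zero]; norm_num
lemma phi_1 : phi 1 = 23 / 25 := by
  have : pos 1 = 0 := by decide
  unfold phi; rw [this, prof_zero]; norm_num
lemma phi_2 : phi 2 = 93 / 100 := by
  have : pos 2 = 1 := by decide
  unfold phi; rw [this, prof_one]; norm_num
lemma drf_0 : drf 0 = 1 / 400 := by
  have : pos 0 = 0 := by decide
  unfold drf; rw [this]; norm_num
lemma drf_1 : drf 1 = 1 / 400 := by
  have : pos 1 = 0 := by decide
  unfold drf; rw [this]; norm_num

lemma lyap_drift {x : ℚ} (hx : x ∈ DyadicQ) :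
    ∑ i, lyap (stepQ i x) ≤ 4 * (lyap x - drift x) := by
  rw [Fin.sum_univ_four]
  rcases dyadic_cases hx with ⟨n, rfl⟩ | ⟨k, m, hk, hxk⟩
  · have d1 : lyap ((n : ℚ) - 1) = phi (n - 1) := by
      have := dep_int (n - 1)
      push_cast at this
      simp [lyap, this]
    have d2 : lyap ((n : ℚ) + 1) = phi (n + 1) := by
      have := dep_int (n + 1)
      push_cast at this
      simp [lyap, this]
    have d0 : lyap (n : ℚ) = phi n := by simp [lyap, dep_int]
    have dd : drift (n : ℚ) = drf n := by simp [drift, dep_int]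
    rcases lt_or_ge 1 n with h | h
    · have h1 : (1 : ℚ) < n := by exact_mod_cast h
      have hs : stepQ 2 (n : ℚ) = n - 1 := by
        simp only [stepQ]
        rw [if_neg (by linarith)]
        split_ifs with h2
        · have : n ≤ 2 := by exact_mod_cast h2
          obtain rfl : n = 2 := by omega
          norm_num
        · rfl
      have hs' : stepQ 3 (n : ℚ) = n + 1 := by
        simp only [stepQ]
        rw [if_neg (by linarith), if_neg (by linarith)]
      rw [hs, hs']
      simp only [stepQ]
      rw [d1, d2, d0, dd]
      have := phi_lin_pos n (by omega)
      linarith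
    · rcases lt_or_ge 0 n with h' | h'
      · obtain rfl : n = 1 := by omega
        have e : lyap (1 / 2) = 4 / 5 := by
          have := dep_odd 1 (by decide) 1
          norm_num at this
          have hf : ⌊(1 / 2 : ℚ)⌋ = 0 := by norm_num [Int.floor_eq_iff]
          rw [lyap, hf, phi_0]
          norm_num [this]
        have e2 : stepQ 2 ((1 : ℤ) : ℚ) = 1 / 2 := by norm_num [stepQ]
        have e3 : stepQ 3 ((1 : ℤ) : ℚ) = ((1 : ℤ) : ℚ) + 1 := by norm_num [stepQ]
        rw [e2, e3]
        simp only [stepQ]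
        rw [e, d1, d2, d0, dd]
        norm_num [phi_0, phi_1, phi_2, drf_1]
      · have h1 : (n : ℚ) ≤ 0 := by exact_mod_cast h'
        simp only [stepQ, if_pos h1]
        rw [d1, d2, d0, dd]
        rcases lt_or_eq_of_le h' with h2 | rfl
        · have := phi_lin_neg n h2
          linarith
        · norm_num [phi_m1, phi_0, phi_1, drf_0]
  · have hd : dep x = m + 1 := by rw [hxk]; exact dep_odd k hk _
    have hd1 : dep (x - 1) = m + 1 := by
      have := dep_odd (k - 2 ^ (m + 1)) (hk.sub_even (by simp [pow_succ])) (m + 1)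
      rw [← this, hxk]; congr 1; push_cast; field_simp
    have hd2 : dep (x + 1) = m + 1 := by
      have := dep_odd (k + 2 ^ (m + 1)) (hk.add_even (by simp [pow_succ])) (m + 1)
      rw [← this, hxk]; congr 1; push_cast; field_simp
    have hd3 : dep (x / 2) = m + 2 := by
      have := dep_odd k hk (m + 2)
      rw [← this, hxk]; congr 1; field_simp; ring
    have hd4 : dep (2 * x) = m := by
      have := dep_odd k hk m
      rw [← this, hxk]; congr 1; field_simp; ring
    have hni : ∀ n : ℤ, x ≠ n := by
      rintro n rfl
      rw [dep_int] at hd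
      omega
    set n := ⌊x⌋ with hn
    have hlo : (n : ℚ) < x := lt_of_le_of_ne (Int.floor_le x) (hni n).symm
    have hhi : x < n + 1 := Int.lt_floor_add_one x
    have d1 : lyap (x - 1) = (4 / 5) ^ (m + 1) * phi (n - 1) := by
      rw [lyap, hd1, Int.floor_sub_one]
    have d2 : lyap (x + 1) = (4 / 5) ^ (m + 1) * phi (n + 1) := by
      rw [lyap, hd2, Int.floor_add_one]
    have d0 : lyap x = (4 / 5) ^ (m + 1) * phi n := by rw [lyap, hd]
    have dd : drift x = (4 / 5) ^ (m + 1) * drf n := by rw [drift, hd]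
    have hp : (0 : ℝ) < (4 / 5) ^ m := by positivity
    rcases lt_or_ge 1 n with h | h
    · have h1 : (2 : ℚ) ≤ n := by exact_mod_cast h
      simp only [stepQ]
      rw [if_neg (by linarith), if_neg (by linarith), if_neg (by linarith), if_neg (by linarith),
        d1, d2, d0, dd]
      have := mul_le_mul_of_nonneg_left (phi_lin_pos n (by omega)) (by positivity : (0 : ℝ) ≤ (4 / 5) ^ (m + 1))
      linarith
    rcases lt_or_ge 0 n with h' | h'
    · obtain h1 : n = 1 := by omega
      rw [h1] at hlo hhi d1 d2 d0 dd
      push_cast at hlo hhi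
      have hf : ⌊x / 2⌋ = 0 := by
        rw [Int.floor_eq_iff]; constructor <;> push_cast <;> linarith
      have d3 : lyap (x / 2) = (4 / 5) ^ (m + 2) * phi 0 := by rw [lyap, hd3, hf]
      simp only [stepQ]
      rw [if_neg (by linarith), if_pos (by linarith), if_neg (by linarith), if_neg (by linarith),
        d1, d2, d3, d0, dd]
      norm_num only [phi_0, phi_1, phi_2, drf_1, pow_succ]
      linarith
    rcases lt_or_eq_of_le h' with h2 | h2
    · have h1 : x ≤ 0 := by
        have : (n : ℚ) + 1 ≤ 0 := by exact_mod_cast h2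
        linarith
      simp only [stepQ, if_pos h1]
      rw [d1, d2, d0, dd]
      have := mul_le_mul_of_nonneg_left (phi_lin_neg n h2) (by positivity : (0 : ℝ) ≤ (4 / 5) ^ (m + 1))
      linarith
    · rw [h2] at hlo hhi d1 d2 d0 dd
      push_cast at hlo hhi
      have hf : ⌊x / 2⌋ = 0 := by
        rw [Int.floor_eq_iff]; constructor <;> push_cast <;> linarith
      have d3 : lyap (x / 2) = (4 / 5) ^ (m + 2) * phi 0 := by rw [lyap, hd3, hf]
      have d4 : lyap (2 * x) ≤ (4 / 5) ^ m := by
        rw [lyap, hd4]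
        have : phi ⌊2 * x⌋ ≤ 1 := by
          rcases lt_or_ge (2 * x) 1 with h5 | h5
          · have : ⌊2 * x⌋ = 0 := by
              rw [Int.floor_eq_iff]; constructor <;> push_cast <;> linarith
            rw [this, phi_0]
          · have : ⌊2 * x⌋ = 1 := by
              rw [Int.floor_eq_iff]; constructor <;> push_cast <;> linarith
            rw [this, phi_1]; norm_num
        nlinarith
      simp only [stepQ]
      rw [if_neg (by linarith), if_pos (by linarith), if_neg (by linarith), if_pos (by linarith),
        d1, d2, d3, d0, dd]
      norm_num only [phi_0, phi_1, phi_m1, drf_0, pow_succ]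
      linarith

/-! ### The supermartingale -/

lemma walkQ_congr {s t : ℕ → Fin 4} (x : ℚ) {n : ℕ} (h : ∀ i < n, s i = t i) :
    walkQ s x n = walkQ t x n := by
  induction n with
  | zero => rfl
  | succ n ih =>
    simp only [walkQ]
    rw [ih fun i hi => h i (by omega), h n (by omega)]

lemma walkQ_dyadic (s : ℕ → Fin 4) (n : ℕ) : walkQ s 0 n ∈ DyadicQ := by
  induction n with
  | zero => exact ⟨0, 0, by simp [walkQ]⟩
  | succ n ih => exact dyadic_step _ ih

/-- The compensated process on sequences. -/
def proc (n : ℕ) (c : ℕ → Fin 4) : ℝ :=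
  lyap (walkQ c 0 n) + ∑ k ∈ Finset.range n, drift (walkQ c 0 k)

lemma proc_congr {s t : ℕ → Fin 4} {n : ℕ} (h : ∀ i < n, s i = t i) : proc n s = proc n t := by
  unfold proc
  rw [walkQ_congr 0 h]
  congr 1
  refine Finset.sum_congr rfl fun k hk => ?_
  rw [walkQ_congr 0 fun i hi => h i (hi.trans (Finset.mem_range.1 hk))]

lemma proc_nonneg (n : ℕ) (c : ℕ → Fin 4) : 0 ≤ proc n c :=
  add_nonneg (lyap_nonneg _) (Finset.sum_nonneg fun _ _ => drift_nonneg _)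

lemma proc_step (n : ℕ) (c : ℕ → Fin 4) :
    ∑ i, proc (n + 1) (Function.update c n i) ≤ 4 * proc n c := by
  have h1 : ∀ i, proc (n + 1) (Function.update c n i) =
      lyap (stepQ i (walkQ c 0 n)) + ∑ k ∈ Finset.range (n + 1), drift (walkQ c 0 k) := by
    intro i
    have hw : ∀ k ≤ n, walkQ (Function.update c n i) 0 k = walkQ c 0 k := fun k hk =>
      walkQ_congr 0 fun j hj => Function.update_of_ne (by omega) _ _
    unfold proc
    congr 1
    · simp [walkQ, hw n le_rfl]
    · exact Finset.sum_congr rfl fun k hk => by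
        rw [hw k (by simpa [Nat.lt_succ_iff] using hk)]
  simp_rw [h1]
  rw [Finset.sum_add_distrib, Finset.sum_range_succ]
  simp only [Finset.sum_const, Finset.card_univ, Fintype.card_fin, nsmul_eq_mul]
  have := lyap_drift (walkQ_dyadic c n)
  unfold proc
  push_cast
  linarith

/-- Extension of a finite word. -/
def extWord (n : ℕ) (w : Fin n → Fin 4) (i : ℕ) : Fin 4 := if h : i < n then w ⟨i, h⟩ else 0

section
variable {Ω : Type*} [MeasurableSpace Ω]

/-- The first `n` letters. -/
def pref (s : ℕ → Ω → Fin 4) (n : ℕ) (ω : Ω) : Fin n → Fin 4 := fun i => s i ω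

lemma pref_meas {s : ℕ → Ω → Fin 4} (hmeas : ∀ n i, MeasurableSet {ω | s n ω = i}) (n : ℕ) :
    Measurable (pref s n) := by
  refine measurable_pi_iff.2 fun i => ?_
  exact measurable_to_countable' fun j => hmeas i j

/-- The filtration generated by the letters. -/
def filt (s : ℕ → Ω → Fin 4) (hmeas : ∀ n i, MeasurableSet {ω | s n ω = i}) :
    Filtration ℕ (inferInstance : MeasurableSpace Ω) where
  seq n := MeasurableSpace.comap (pref s n) inferInstance
  mono' := by
    intro m n hmn
    have : pref s m = (fun w i => w (Fin.castLE hmn i)) ∘ pref s n := rfl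
    simp only
    rw [this, ← MeasurableSpace.comap_comp]
    exact MeasurableSpace.comap_mono (Measurable.comap_le (measurable_of_finite _))
  le' n := (pref_meas hmeas n).comap_le

lemma proc_eq (s : ℕ → Ω → Fin 4) (n : ℕ) :
    (fun ω => proc n fun i => s i ω) = (fun w => proc n (extWord n w)) ∘ pref s n := by
  funext ω
  exact proc_congr fun i hi => by simp [extWord, pref, hi]

variable (P : Measure Ω) [IsProbabilityMeasure P]
    (s : ℕ → Ω → Fin 4)

lemma proc_int (hmeas : ∀ n i, MeasurableSet {ω | s n ω = i}) (n : ℕ) :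
    Integrable (fun ω => proc n fun i => s i ω) P := by
  rw [proc_eq]
  have : IsFiniteMeasure (P.map (pref s n)) := inferInstance
  exact (Integrable.of_finite (μ := P.map (pref s n))).comp_measurable (pref_meas hmeas n)

lemma cyl_meas (hmeas : ∀ n i, MeasurableSet {ω | s n ω = i}) (n : ℕ) (c : ℕ → Fin 4) :
    MeasurableSet {ω | ∀ i < n, s i ω = c i} := by
  have : {ω | ∀ i < n, s i ω = c i} = ⋂ i, ⋂ (_ : i < n), {ω | s i ω = c i} := by
    ext ω; simp
  rw [this]
  exact MeasurableSet.iInter fun i => MeasurableSet.iInter fun _ => hmeas _ _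

lemma cyl_int
    (hmeas : ∀ n i, MeasurableSet {ω | s n ω = i})
    (hiid : ∀ (n : ℕ) (c : ℕ → Fin 4),
      P {ω | ∀ i < n, s i ω = c i} = (4 : ENNReal)⁻¹ ^ n) (n : ℕ) (c : ℕ → Fin 4) :
    ∫ ω in {ω | ∀ i < n, s i ω = c i}, proc n (fun i => s i ω) ∂P = (4⁻¹ : ℝ) ^ n * proc n c := by
  rw [setIntegral_congr_fun (g := fun _ => proc n c) (cyl_meas s hmeas n c)
    (fun ω hω => proc_congr hω)]
  rw [setIntegral_const, Measure.real, hiid]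
  simp

lemma cyl_int_succ
    (hmeas : ∀ n i, MeasurableSet {ω | s n ω = i})
    (hiid : ∀ (n : ℕ) (c : ℕ → Fin 4),
      P {ω | ∀ i < n, s i ω = c i} = (4 : ENNReal)⁻¹ ^ n) (n : ℕ) (c : ℕ → Fin 4) :
    ∫ ω in {ω | ∀ i < n, s i ω = c i}, proc (n + 1) (fun i => s i ω) ∂P
      ≤ ∫ ω in {ω | ∀ i < n, s i ω = c i}, proc n (fun i => s i ω) ∂P := by
  have hU : {ω | ∀ i < n, s i ω = c i} =
      ⋃ j, {ω | ∀ i < n + 1, s i ω = Function.update c n j i} := by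
    ext ω
    simp only [Set.mem_ofPred_eq, Set.mem_iUnion]
    constructor
    · intro h
      refine ⟨s n ω, fun i hi => ?_⟩
      rcases Nat.lt_succ_iff_lt_or_eq.1 hi with h1 | rfl
      · rw [Function.update_of_ne (by omega)]; exact h i h1
      · simp
    · rintro ⟨j, h⟩ i hi
      rw [h i (by omega), Function.update_of_ne (by omega)]
  rw [cyl_int P s hmeas hiid, hU, integral_iUnion_fintype (fun j => cyl_meas s hmeas _ _)]
  · simp_rw [cyl_int P s hmeas hiid]
    rw [← Finset.mul_sum, pow_succ, mul_assoc]
    have := proc_step n c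
    gcongr
    linarith
  · intro a b hab
    refine Set.disjoint_left.2 fun ω ha hb => hab ?_
    have h1 := ha n (by omega)
    have h2 := hb n (by omega)
    simp only [Function.update_self] at h1 h2
    rw [← h1, h2]
  · exact fun j => (proc_int P s hmeas _).integrableOn

lemma proc_super
    (hmeas : ∀ n i, MeasurableSet {ω | s n ω = i})
    (hiid : ∀ (n : ℕ) (c : ℕ → Fin 4),
      P {ω | ∀ i < n, s i ω = c i} = (4 : ENNReal)⁻¹ ^ n) : Supermartingale (fun n ω => proc n fun i => s i ω) (filt s hmeas) P := by
  refine supermartingale_of_setIntegral_succ_le ?_ (proc_int P s hmeas) ?_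
  · intro n
    beta_reduce
    rw [proc_eq]
    refine Measurable.stronglyMeasurable ?_
    exact (measurable_of_finite _).comp (comap_measurable _)
  · rintro n A ⟨B, -, rfl⟩
    have hU : pref s n ⁻¹' B = ⋃ w : B, {ω | ∀ i < n, s i ω = extWord n w i} := by
      ext ω
      simp only [Set.mem_preimage, Set.mem_iUnion, Set.mem_ofPred_eq]
      constructor
      · intro h
        exact ⟨⟨_, h⟩, fun i hi => by simp [extWord, pref, hi]⟩
      · rintro ⟨w, h⟩
        convert w.2
        funext i
        have := h i i.2
        simpa [extWord, pref] using this
    have hdis : Pairwise (Function.onFun Disjoint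
        fun w : B => {ω | ∀ i < n, s i ω = extWord n w i}) := by
      intro a b hab
      refine Set.disjoint_left.2 fun ω ha hb => hab ?_
      apply Subtype.ext
      funext i
      have h1 := ha i i.2
      have h2 := hb i i.2
      simp only [extWord, i.2, dif_pos] at h1 h2
      rw [← h1, h2]
    classical
    have : Fintype B := Fintype.ofFinite B
    rw [hU, integral_iUnion_fintype (fun j => cyl_meas s hmeas _ _) hdis
      (fun j => (proc_int P s hmeas _).integrableOn),
      integral_iUnion_fintype (fun j => cyl_meas s hmeas _ _) hdis
      (fun j => (proc_int P s hmeas _).integrableOn)]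
    exact Finset.sum_le_sum fun w _ => cyl_int_succ P s hmeas hiid n _

lemma proc_bdd
    (hmeas : ∀ n i, MeasurableSet {ω | s n ω = i})
    (hiid : ∀ (n : ℕ) (c : ℕ → Fin 4),
      P {ω | ∀ i < n, s i ω = c i} = (4 : ENNReal)⁻¹ ^ n) : ∀ᵐ ω ∂P, ∃ K : ℝ, ∀ n, proc n (fun i => s i ω) ≤ K := by
  have hsup := proc_super P s hmeas hiid
  have hbd : ∀ n, eLpNorm ((-fun n ω => proc n fun i => s i ω) n) 1 P
      ≤ ((∫ ω, proc 0 (fun i => s i ω) ∂P).toNNReal : NNReal) := by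
    intro n
    rw [Pi.neg_apply, eLpNorm_neg, eLpNorm_one_eq_lintegral_enorm,
      ← ofReal_integral_norm_eq_lintegral_enorm (proc_int P s hmeas n)]
    change _ ≤ ENNReal.ofReal _
    apply ENNReal.ofReal_le_ofReal
    have h1 := hsup.setIntegral_le (Nat.zero_le n) MeasurableSet.univ
    simp only [Measure.restrict_univ] at h1
    refine le_trans (le_of_eq ?_) h1
    congr 1
    funext ω
    exact Real.norm_of_nonneg (proc_nonneg _ _)
  filter_upwards [hsup.neg.exists_ae_tendsto_of_bdd hbd] with ω ⟨c, hc⟩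
  have := hc.neg
  simp only [Pi.neg_apply, neg_neg] at this
  obtain ⟨K, hK⟩ := this.bddAbove_range
  exact ⟨K, fun n => hK ⟨n, rfl⟩⟩

end

lemma walk_tendsto (c : ℕ → Fin 4) (K : ℝ) (hK : ∀ n, proc n c ≤ K) :
    Tendsto (fun n => dep (walkQ c 0 n)) atTop atTop := by
  have hl : ∀ n, lyap (walkQ c 0 n) ≤ K := fun n => by
    refine le_trans ?_ (hK n)
    exact le_add_of_nonneg_right (Finset.sum_nonneg fun _ _ => drift_nonneg _)
  have hs : Summable fun n => drift (walkQ c 0 n) := by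
    refine summable_of_sum_range_le (fun _ => drift_nonneg _) (c := K) fun n => ?_
    refine le_trans ?_ (hK n)
    exact le_add_of_nonneg_left (lyap_nonneg _)
  have hz := hs.tendsto_atTop_zero
  rw [tendsto_atTop]
  intro M
  have hp : Tendsto prof atTop atTop := Real.tendsto_sum_range_one_div_nat_succ_atTop
  obtain ⟨k0, hk0⟩ := (hp.eventually_gt_atTop (100 * (K * (5 / 4) ^ M))).exists_forall_of_atTop
  have hpos : (0 : ℝ) < (4 / 5) ^ M * (1 / (400 * ((k0 : ℝ) + 1) ^ 2)) := by positivity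
  filter_upwards [hz.eventually (gt_mem_nhds hpos)] with n hn
  by_contra! hlt
  set x := walkQ c 0 n
  have hL : (4 / 5 : ℝ) ^ M ≤ (4 / 5) ^ dep x :=
    pow_le_pow_of_le_one (by norm_num) (by norm_num) hlt.le
  have h1 : (4 / 5 : ℝ) ^ M * phi ⌊x⌋ ≤ K :=
    (mul_le_mul_of_nonneg_right hL (phi_nonneg _)).trans (hl n)
  have h2 : phi ⌊x⌋ ≤ K * (5 / 4) ^ M := by
    have e : (4 / 5 : ℝ) ^ M * (5 / 4) ^ M = 1 := by rw [← mul_pow]; norm_num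
    have := mul_le_mul_of_nonneg_right h1 (by positivity : (0 : ℝ) ≤ (5 / 4) ^ M)
    calc phi ⌊x⌋ = (4 / 5 : ℝ) ^ M * (5 / 4) ^ M * phi ⌊x⌋ := by rw [e, one_mul]
      _ ≤ _ := by linarith
  have h3 : prof (pos ⌊x⌋) ≤ 100 * (K * (5 / 4) ^ M) := by
    unfold phi at h2
    split_ifs at h2 <;> linarith
  have h4 : pos ⌊x⌋ < k0 := by
    by_contra! h
    exact absurd (hk0 _ h) (not_lt.2 h3)
  have h5 : (pos ⌊x⌋ : ℝ) ≤ k0 := by exact_mod_cast h4.le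
  refine absurd hn (not_lt.2 ?_)
  unfold drift drf
  gcongr

lemma two_pow_dep_le {x : ℚ} (h : 1 ≤ dep x) : (2 : ℚ) ^ dep x ≤ padicNorm 2 x := by
  have hx : x ≠ 0 := by
    rintro rfl
    simp [dep] at h
  rw [padicNorm.eq_zpow_of_nonzero hx]
  have : (-padicValRat 2 x) = (dep x : ℤ) := by
    unfold dep at h ⊢
    omega
  rw [this]
  simp

/-- Along almost every sample path of the simple random walk on the Schreier graph
`Γ ≅ ℤ[1/2]` started at `0`, the `2`-adic norm tends to infinity.  The probability space is
any space carrying an i.i.d. sequence `s` of uniformly distributed choices in `{1,2,3,4}`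
(i.e. the uniform product measure on `{1,2,3,4}^ℕ`). -/
theorem padicNorm_tendsto_atTop_of_simple_random_walk
    {Ω : Type*} [MeasurableSpace Ω] (P : Measure Ω) [IsProbabilityMeasure P]
    (s : ℕ → Ω → Fin 4)
    (hmeas : ∀ n i, MeasurableSet {ω | s n ω = i})
    (hiid : ∀ (n : ℕ) (c : ℕ → Fin 4),
      P {ω | ∀ i < n, s i ω = c i} = (4 : ENNReal)⁻¹ ^ n) :
    ∀ᵐ ω ∂P,
      Tendsto (fun n => padicNorm 2 (walkQ (fun i => s i ω) 0 n)) atTop atTop := by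
  filter_upwards [proc_bdd P s hmeas hiid] with ω ⟨K, hK⟩
  have h := walk_tendsto _ K hK
  have h2 : Tendsto (fun n => (2 : ℚ) ^ dep (walkQ (fun i => s i ω) 0 n)) atTop atTop :=
    (tendsto_pow_atTop_atTop_of_one_lt (by norm_num)).comp h
  refine tendsto_atTop_mono' _ ?_ h2
  filter_upwards [h.eventually_ge_atTop 1] with n hn
  exact two_pow_dep_le hn
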